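/- Let (Xₜ) be a process satisfying P(max_{a≤t≤b}|X(t)−X(a)| > x) ≤ A₇ exp(−A₈ x^{2α/(α+2H)}/(b−a)^{2H(α−1)/(α+2H)}) for all 0 ≤ a < b and x > 0, with A₇, A₈ > 0, α ∈ (1,2], H ∈ (0,1). Then for every fixed t > 0, almost surely limsup_{h→0⁺} max_{|s|≤h}|X(t+s) − X(t)| / (h^{H(α−1)/α}(log log(1/h))^{(α+2H)/(2α)}) ≤ A₈^{−(α+2H)/(2α)}. -/

import Mathlib

open MeasureTheory Real Filter

/-- the normalising function -/
noncomputable def nrm14 (κ r h : ℝ) : ℝ := h ^ κ * (Real.log (Real.log (1 / h))) ^ r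

lemma log_inv14 {ρ : ℝ} (n : ℕ) : Real.log (1 / (ρ ^ n)⁻¹) = n * Real.log ρ := by
  rw [one_div, inv_inv, Real.log_pow]

lemma ev14 {ρ : ℝ} (hρ : 1 < ρ) (M : ℝ) : ∀ᶠ n : ℕ in atTop, M < n * Real.log ρ := by
  have h : Tendsto (fun n : ℕ => (n : ℝ) * Real.log ρ) atTop atTop :=
    tendsto_natCast_atTop_atTop.atTop_mul_const (Real.log_pos hρ)
  exact h.eventually_gt_atTop M

lemma bc14 {Ω : Type*} [MeasurableSpace Ω] (μ : Measure Ω)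
    (p q κ r A₇ A₈ : ℝ) (hp : 0 < p) (hq : 0 < q) (hpr : r * p = 1) (hκ : κ * p = q)
    (hA₇ : 0 < A₇) (hA₈ : 0 < A₈)
    (X : ℝ → Ω → ℝ)
    (hcont : ∀ ω, Continuous (fun t => X t ω))
    (htail : ∀ a b x : ℝ, 0 ≤ a → a < b → 0 < x →
      μ {ω | x < ⨆ t : Set.Icc a b, |X t ω - X a ω|}
        ≤ ENNReal.ofReal (A₇ * Real.exp (-(A₈ * x ^ p / (b - a) ^ q))))
    (ρ θ y : ℝ) (hρ : 1 < ρ) (hθ : 0 < θ) (hy : 0 < y) (hyy : 1 < A₈ * y ^ p / θ ^ q)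
    (a b : ℕ → ℝ)
    (hab : ∀ᶠ n in atTop, 0 ≤ a n ∧ a n < b n ∧ b n - a n ≤ θ * (ρ ^ n)⁻¹) :
    ∀ᵐ ω ∂μ, ∀ᶠ n in atTop, ∀ u ∈ Set.Icc (a n) (b n),
      |X u ω - X (a n) ω| ≤ y * nrm14 κ r ((ρ ^ n)⁻¹) := by
  set β := A₈ * y ^ p / θ ^ q with hβ
  have hl := Real.log_pos hρ
  obtain ⟨n0, hn0⟩ := eventually_atTop.1 (hab.and (ev14 hρ 1))
  set S : ℕ → Set Ω := fun n => {ω | n0 ≤ n ∧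
    y * nrm14 κ r ((ρ ^ n)⁻¹) < ⨆ t : Set.Icc (a n) (b n), |X t ω - X (a n) ω|} with hS
  have hsum : Summable (fun n : ℕ => A₇ * (Real.log ρ) ^ (-β) * (n : ℝ) ^ (-β)) :=
    (Real.summable_nat_rpow.2 (by linarith)).mul_left _
  have hbound : ∀ n, μ (S n) ≤ ENNReal.ofReal (A₇ * (Real.log ρ) ^ (-β) * (n : ℝ) ^ (-β)) := by
    intro n
    by_cases hn : n0 ≤ n
    swap
    · have : S n = ∅ := by ext ω; simp [hS, hn]
      rw [this]; simp
    obtain ⟨⟨h1, h2, h3⟩, h4⟩ := hn0 n hn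
    have hL : 0 < Real.log (n * Real.log ρ) := Real.log_pos h4
    have hh : 0 < (ρ ^ n)⁻¹ := by positivity
    have hx : 0 < y * nrm14 κ r ((ρ ^ n)⁻¹) := by
      unfold nrm14; rw [log_inv14]; positivity
    refine (measure_mono (fun ω hω => hω.2)).trans ((htail _ _ _ h1 h2 hx).trans ?_)
    apply ENNReal.ofReal_le_ofReal
    rw [mul_assoc]
    apply mul_le_mul_of_nonneg_left _ hA₇.le
    have hn' : (0:ℝ) < n := by
      by_contra hc
      have : (n:ℝ) = 0 := le_antisymm (not_lt.1 hc) (Nat.cast_nonneg n)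
      rw [this] at h4; linarith
    rw [← Real.mul_rpow hl.le hn'.le, mul_comm (Real.log ρ),
      Real.rpow_def_of_pos (mul_pos hn' hl)]
    apply Real.exp_le_exp.2
    rw [mul_neg, neg_le_neg_iff]
    have e1 : (y * nrm14 κ r ((ρ ^ n)⁻¹)) ^ p
        = y ^ p * (((ρ ^ n)⁻¹) ^ q * Real.log (n * Real.log ρ)) := by
      unfold nrm14
      rw [log_inv14, Real.mul_rpow hy.le (by positivity), Real.mul_rpow (by positivity)
        (by positivity), ← Real.rpow_mul hh.le, ← Real.rpow_mul hL.le, hpr, hκ, Real.rpow_one]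
    have e2 : (b n - a n) ^ q ≤ θ ^ q * ((ρ ^ n)⁻¹) ^ q := by
      rw [← Real.mul_rpow hθ.le hh.le]
      exact Real.rpow_le_rpow (by linarith) h3 hq.le
    have hba : 0 < b n - a n := by linarith
    rw [e1, le_div_iff₀ (by positivity)]
    calc Real.log (n * Real.log ρ) * β * (b n - a n) ^ q
        ≤ Real.log (n * Real.log ρ) * β * (θ ^ q * ((ρ ^ n)⁻¹) ^ q) := by gcongr
      _ = _ := by rw [hβ]; field_simp
  have hfin : ∑' n, μ (S n) ≠ ⊤ :=
    ne_top_of_le_ne_top hsum.tsum_ofReal_ne_top (ENNReal.tsum_le_tsum hbound)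
  filter_upwards [ae_eventually_notMem hfin] with ω hω
  filter_upwards [hω, eventually_ge_atTop n0] with n hn hn1 u hu
  have h5 : ¬ (y * nrm14 κ r ((ρ ^ n)⁻¹) < ⨆ t : Set.Icc (a n) (b n), |X t ω - X (a n) ω|) :=
    fun h => hn ⟨hn1, h⟩
  refine le_trans ?_ (not_lt.1 h5)
  have hc : Continuous (fun t : Set.Icc (a n) (b n) => |X t ω - X (a n) ω|) :=
    (((hcont ω).comp continuous_subtype_val).sub continuous_const).abs
  have hbdd := (isCompact_range hc).bddAbove
  exact le_ciSup hbdd ⟨u, hu⟩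

lemma path14 (Y : ℝ → ℝ) (κ r ρ c t : ℝ) (hκ : 0 < κ) (hr : 0 < r) (hρ : 1 < ρ) (hc : 0 < c)
    (h : ∀ᶠ n : ℕ in atTop, ∀ s ∈ Set.Icc (-(ρ ^ n)⁻¹) ((ρ ^ n)⁻¹),
      |Y (t + s) - Y t| ≤ c * nrm14 κ r ((ρ ^ n)⁻¹)) :
    ∀ᶠ h : ℝ in nhdsWithin (0:ℝ) (Set.Ioi 0),
      (⨆ s : Set.Icc (-h) h, |Y (t + s) - Y t|) / nrm14 κ r h ≤ ρ ^ κ * c := by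
  have hl := Real.log_pos hρ
  have hlim : Tendsto (fun h : ℝ => ⌊Real.log (1 / h) / Real.log ρ⌋₊)
      (nhdsWithin 0 (Set.Ioi 0)) atTop := by
    apply tendsto_nat_floor_atTop.comp
    apply Tendsto.atTop_div_const hl
    refine Real.tendsto_log_atTop.comp (f := fun h : ℝ => 1 / h) ?_
    simp only [one_div]
    exact tendsto_inv_nhdsGT_zero
  have h01 : ∀ᶠ h : ℝ in nhdsWithin (0:ℝ) (Set.Ioi 0), h ∈ Set.Ioo (0:ℝ) 1 :=
    Ioo_mem_nhdsGT one_pos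
  filter_upwards [hlim.eventually h, hlim.eventually (ev14 hρ 1), h01] with h hh h1 ⟨h0, h2⟩
  set n := ⌊Real.log (1 / h) / Real.log ρ⌋₊ with hn
  have hlh : 0 ≤ Real.log (1 / h) := Real.log_nonneg (by rw [one_div]; exact (one_le_inv₀ h0).2 h2.le)
  have hnle : (n:ℝ) * Real.log ρ ≤ Real.log (1 / h) := by
    rw [← le_div_iff₀ hl]; exact Nat.floor_le (by positivity)
  have hnlt : Real.log (1 / h) < ((n:ℝ) + 1) * Real.log ρ := by
    rw [← div_lt_iff₀ hl]; exact Nat.lt_floor_add_one _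
  have hρn : 0 < ρ ^ n := by positivity
  have k1 : h ≤ (ρ ^ n)⁻¹ := by
    rw [← Real.log_le_log_iff h0 (by positivity), Real.log_inv, Real.log_pow]
    rw [one_div, Real.log_inv] at hnle
    linarith
  have k2 : (ρ ^ n)⁻¹ ≤ ρ * h := by
    rw [← Real.log_le_log_iff (by positivity) (by positivity), Real.log_inv, Real.log_pow,
      Real.log_mul (by positivity) (by positivity)]
    rw [one_div, Real.log_inv] at hnlt
    linarith
  have k3 : 0 < Real.log (n * Real.log ρ) := Real.log_pos h1
  have k4 : Real.log (n * Real.log ρ) ≤ Real.log (Real.log (1 / h)) :=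
    Real.log_le_log (by linarith) hnle
  have k5 : nrm14 κ r ((ρ ^ n)⁻¹) ≤ ρ ^ κ * nrm14 κ r h := by
    unfold nrm14
    rw [log_inv14, ← mul_assoc, ← Real.mul_rpow (by positivity) h0.le]
    gcongr
  have k6 : 0 < nrm14 κ r h := by
    have : 0 < Real.log (Real.log (1 / h)) := by linarith
    unfold nrm14; positivity
  rw [div_le_iff₀ k6]
  have : Nonempty (Set.Icc (-h) h) := ⟨⟨0, by constructor <;> linarith⟩⟩
  apply ciSup_le
  rintro ⟨s, hs1, hs2⟩
  calc |Y (t + s) - Y t| ≤ c * nrm14 κ r ((ρ ^ n)⁻¹) := hh s ⟨by linarith, by linarith⟩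
    _ ≤ c * (ρ ^ κ * nrm14 κ r h) := by gcongr
    _ = _ := by ring

lemma main14 {Ω : Type*} [MeasurableSpace Ω] (μ : Measure Ω)
    (p q κ r A₇ A₈ : ℝ) (hp : 0 < p) (hq : 0 < q) (hpr : r * p = 1) (hκ : κ * p = q)
    (hA₇ : 0 < A₇) (hA₈ : 0 < A₈)
    (X : ℝ → Ω → ℝ)
    (hcont : ∀ ω, Continuous (fun t => X t ω))
    (htail : ∀ a b x : ℝ, 0 ≤ a → a < b → 0 < x →
      μ {ω | x < ⨆ t : Set.Icc a b, |X t ω - X a ω|}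
        ≤ ENNReal.ofReal (A₇ * Real.exp (-(A₈ * x ^ p / (b - a) ^ q))))
    (t : ℝ) (ht : 0 < t) (C : ℝ) (hC : A₈ ^ (-r) < C) :
    ∀ᵐ ω ∂μ, ∀ᶠ h : ℝ in nhdsWithin (0:ℝ) (Set.Ioi 0),
      (⨆ s : Set.Icc (-h) h, |X (t + s) ω - X t ω|) / nrm14 κ r h ≤ C := by
  have hr : 0 < r := by
    by_contra hc
    nlinarith
  have hκ0 : 0 < κ := by
    by_contra hc
    nlinarith
  have hA : 0 < A₈ ^ (-r) := by positivity
  obtain ⟨c1, hc1, hc1'⟩ := exists_between hC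
  obtain ⟨c2, hc2, hc2'⟩ := exists_between hc1'
  have hc1p : 0 < c1 := hA.trans hc1
  have hc2p : 0 < c2 := hc1p.trans hc2
  have hCp : 0 < C := hc2p.trans hc2'
  set ρ := (C / c2) ^ (κ⁻¹) with hρd
  have hρ : 1 < ρ := Real.one_lt_rpow ((one_lt_div hc2p).2 hc2') (by positivity)
  have hρκ : ρ ^ κ * c2 = C := by
    rw [hρd, ← Real.rpow_mul (by positivity), inv_mul_cancel₀ hκ0.ne', Real.rpow_one]
    field_simp
  set ε := c2 - c1 with hε
  have hεp : 0 < ε := by linarith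
  have hβ1 : 1 < A₈ * c1 ^ p / 1 ^ q := by
    have : (A₈ ^ (-r)) ^ p < c1 ^ p := Real.rpow_lt_rpow hA.le hc1 hp
    rw [← Real.rpow_mul hA₈.le, neg_mul, hpr, Real.rpow_neg_one] at this
    rw [Real.one_rpow, div_one]
    calc 1 = A₈ * A₈⁻¹ := by field_simp
      _ < _ := by gcongr
  obtain ⟨N, hN1, hN⟩ : ∃ N : ℕ, 0 < N ∧ 1 < A₈ * ε ^ p / ((N:ℝ)⁻¹) ^ q := by
    have hT : Tendsto (fun N : ℕ => A₈ * ε ^ p * (N:ℝ) ^ q) atTop atTop :=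
      ((tendsto_rpow_atTop hq).comp tendsto_natCast_atTop_atTop).const_mul_atTop (by positivity)
    obtain ⟨N, hN, hN'⟩ := ((hT.eventually_gt_atTop 1).and (eventually_gt_atTop 0)).exists
    refine ⟨N, hN', ?_⟩
    rwa [Real.inv_rpow (by positivity), div_inv_eq_mul]
  have hNp : (0:ℝ) < N := by exact_mod_cast hN1
  have hsmall : ∀ᶠ n : ℕ in atTop, (ρ ^ n)⁻¹ < t := by
    have := (tendsto_inv_atTop_zero.comp (tendsto_pow_atTop_atTop_of_one_lt hρ))
    exact this.eventually_lt_const ht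
  have hpos : ∀ n : ℕ, 0 < (ρ ^ n)⁻¹ := fun n => by positivity
  have hk : ∀ k : Fin N, ((k:ℕ):ℝ) + 1 ≤ N := fun k => by exact_mod_cast k.2
  have R := bc14 μ p q κ r A₇ A₈ hp hq hpr hκ hA₇ hA₈ X hcont htail ρ 1 c1 hρ one_pos hc1p hβ1
    (fun _ => t) (fun n => t + (ρ ^ n)⁻¹)
    (Eventually.of_forall fun n => ⟨ht.le, by linarith [hpos n], by linarith⟩)
  have L1 : ∀ k : Fin N, _ := fun k =>
    bc14 μ p q κ r A₇ A₈ hp hq hpr hκ hA₇ hA₈ X hcont htail ρ 1 c1 hρ one_pos hc1p hβ1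
    (fun n => t - (((k:ℕ):ℝ) + 1) * ((N:ℝ)⁻¹ * (ρ ^ n)⁻¹)) (fun n => t) (by
      filter_upwards [hsmall] with n hn
      have h1 := hpos n
      have h2 : (((k:ℕ):ℝ) + 1) * ((N:ℝ)⁻¹ * (ρ ^ n)⁻¹) ≤ (ρ ^ n)⁻¹ := by
        calc _ ≤ (N:ℝ) * ((N:ℝ)⁻¹ * (ρ ^ n)⁻¹) := by gcongr; exact hk k
          _ = _ := by field_simp
      have h3 : 0 < (((k:ℕ):ℝ) + 1) * ((N:ℝ)⁻¹ * (ρ ^ n)⁻¹) := by positivity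
      exact ⟨by linarith, by linarith, by linarith⟩)
  have L2 : ∀ k : Fin N, _ := fun k =>
    bc14 μ p q κ r A₇ A₈ hp hq hpr hκ hA₇ hA₈ X hcont htail ρ (N:ℝ)⁻¹ ε hρ (by positivity) hεp hN
    (fun n => t - (((k:ℕ):ℝ) + 1) * ((N:ℝ)⁻¹ * (ρ ^ n)⁻¹))
    (fun n => t - ((k:ℕ):ℝ) * ((N:ℝ)⁻¹ * (ρ ^ n)⁻¹)) (by
      filter_upwards [hsmall] with n hn
      have h1 := hpos n
      have h2 : (((k:ℕ):ℝ) + 1) * ((N:ℝ)⁻¹ * (ρ ^ n)⁻¹) ≤ (ρ ^ n)⁻¹ := by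
        calc _ ≤ (N:ℝ) * ((N:ℝ)⁻¹ * (ρ ^ n)⁻¹) := by gcongr; exact hk k
          _ = _ := by field_simp
      have h3 : 0 < ((N:ℝ)⁻¹ * (ρ ^ n)⁻¹) := by positivity
      exact ⟨by linarith, by linarith, by linarith⟩)
  filter_upwards [R, ae_all_iff.2 L1, ae_all_iff.2 L2] with ω r1 l1 l2
  rw [← hρκ]
  apply path14 (fun u => X u ω) κ r ρ c2 t hκ0 hr hρ hc2p
  filter_upwards [r1, eventually_all.2 l1, eventually_all.2 l2, ev14 hρ 1] with n r1 l1 l2 h4 s hs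
  have hL : 0 < Real.log (n * Real.log ρ) := Real.log_pos h4
  have hh := hpos n
  have hx : 0 < nrm14 κ r ((ρ ^ n)⁻¹) := by
    unfold nrm14; rw [log_inv14]; positivity
  have hsplit : c2 * nrm14 κ r ((ρ ^ n)⁻¹) = c1 * nrm14 κ r ((ρ ^ n)⁻¹)
    + ε * nrm14 κ r ((ρ ^ n)⁻¹) := by rw [hε]; ring
  have hx2 : 0 < ε * nrm14 κ r ((ρ ^ n)⁻¹) := by positivity
  rcases le_or_gt 0 s with h0 | h0
  · have := r1 (t + s) ⟨by linarith, by linarith [hs.2]⟩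
    linarith
  · set d := (N:ℝ)⁻¹ * (ρ ^ n)⁻¹ with hd
    have hdp : 0 < d := by positivity
    have hNd : N * d = (ρ ^ n)⁻¹ := by rw [hd]; field_simp
    obtain ⟨k, hk1, hk2⟩ : ∃ k : Fin N, ((k:ℕ):ℝ) * d ≤ -s ∧ -s ≤ (((k:ℕ):ℝ) + 1) * d := by
      rcases lt_or_ge (-s) (N * d) with h5 | h5
      · have h6 : ⌊-s / d⌋₊ < N := by
          rw [Nat.floor_lt (div_nonneg (by linarith) hdp.le), div_lt_iff₀ hdp]; exact h5
        refine ⟨⟨_, h6⟩, ?_, ?_⟩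
        · rw [← le_div_iff₀ hdp]; exact Nat.floor_le (div_nonneg (by linarith) hdp.le)
        · rw [← div_le_iff₀ hdp]; exact (Nat.lt_floor_add_one _).le
      · have h6 : -s = N * d := le_antisymm (by rw [hNd]; linarith [hs.1]) h5
        refine ⟨⟨N - 1, by omega⟩, ?_, ?_⟩
        · simp only [Nat.cast_sub (Nat.succ_le_of_lt hN1)]
          push_cast
          linarith
        · simp only [Nat.cast_sub (Nat.succ_le_of_lt hN1)]
          push_cast
          linarith
    have e1 := l1 k t ⟨by have : 0 ≤ (((k:ℕ):ℝ) + 1) * d := by positivity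
                          linarith, le_rfl⟩
    have e2 := l2 k (t + s) ⟨by linarith, by linarith⟩
    rw [hsplit]
    rw [abs_le] at e1 e2 ⊢
    constructor <;> linarith [e1.1, e1.2, e2.1, e2.2]

theorem stmt_14 {Ω : Type*} [MeasurableSpace Ω] (μ : Measure Ω) [IsProbabilityMeasure μ]
    (α H A₇ A₈ : ℝ) (hα : α ∈ Set.Ioc (1:ℝ) 2) (hH : H ∈ Set.Ioo (0:ℝ) 1)
    (hA₇ : 0 < A₇) (hA₈ : 0 < A₈)
    (X : ℝ → Ω → ℝ)
    (hcont : ∀ ω, Continuous (fun t => X t ω))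
    (htail : ∀ a b x : ℝ, 0 ≤ a → a < b → 0 < x →
      μ {ω | x < ⨆ t : Set.Icc a b, |X t ω - X a ω|}
        ≤ ENNReal.ofReal (A₇ * Real.exp (-(A₈ * x ^ (2 * α / (α + 2 * H))
            / (b - a) ^ (2 * H * (α - 1) / (α + 2 * H))))))
    (t : ℝ) (ht : 0 < t) :
    ∀ᵐ ω ∂μ,
      Filter.limsup
        (fun h : ℝ => (⨆ s : Set.Icc (-h) h, |X (t + s) ω - X t ω|)
          / (h ^ (H * (α - 1) / α) * (Real.log (Real.log (1 / h))) ^ ((α + 2 * H) / (2 * α))))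
        (nhdsWithin 0 (Set.Ioi 0))
      ≤ A₈ ^ (-((α + 2 * H) / (2 * α))) := by
  have hα0 : 0 < α := by linarith [hα.1]
  have hα1 : 0 < α - 1 := by linarith [hα.1]
  have hH0 : 0 < H := hH.1
  have key := main14 μ (2 * α / (α + 2 * H)) (2 * H * (α - 1) / (α + 2 * H))
    (H * (α - 1) / α) ((α + 2 * H) / (2 * α)) A₇ A₈ (by positivity) (by positivity)
    (by field_simp) (by field_simp) hA₇ hA₈ X hcont htail t ht
  set K := A₈ ^ (-((α + 2 * H) / (2 * α))) with hK
  have key2 : ∀ m : ℕ, _ := fun m : ℕ => key (K + 1 / ((m:ℝ) + 1))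
    (by have : 0 < 1 / ((m:ℝ) + 1) := by positivity
        linarith)
  filter_upwards [ae_all_iff.2 key2] with ω hω
  apply le_of_forall_pos_le_add
  intro e he
  obtain ⟨m, hm⟩ := exists_nat_one_div_lt he
  refine le_trans ?_ (add_le_add le_rfl hm.le)
  refine limsup_le_of_le ?_ (hω m)
  apply IsBoundedUnder.isCoboundedUnder_le
  refine ⟨0, ?_⟩
  rw [eventually_map]
  have hsm : ∀ᶠ h : ℝ in nhdsWithin (0:ℝ) (Set.Ioi 0), h ∈ Set.Ioo (0:ℝ) (Real.exp (-1)) :=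
    Ioo_mem_nhdsGT (Real.exp_pos _)
  filter_upwards [hsm] with h ⟨h0, h1⟩
  have hl : 1 ≤ Real.log (1 / h) := by
    rw [one_div, Real.log_inv]
    have := Real.log_lt_log h0 h1
    rw [Real.log_exp] at this
    linarith
  have := Real.log_nonneg hl
  apply div_nonneg (Real.iSup_nonneg fun s => abs_nonneg _)
  positivity
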